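/- arXiv:1606.02267 — 3 statements merged into one kernel-verified Lean document; each statement's English description precedes it below -/
import Mathlib

section
/- (Toy diophantine remark of Section 4) Let A, B ∈ ℝ² with dist(A,B) = 1 and let ℓ = [A,B] be the segment joining them. Let M be a positive integer and let P₁, P₂, P₃ ∈ ℚ² ⊆ ℝ² be points each of whose two coordinates is a rational number with denominator at most M. Suppose each P_i lies within distance ε of the segment ℓ, where 0 < ε < (1/10)·M^{-6}. Then P₁, P₂, P₃ are collinear. -/
/-!
Write `D` for the cross product `(P₂ - P₁) × (P₃ - P₁)`, twice the signed area of the triangle.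
Its product with the six coordinate denominators is an integer, so `D ≠ 0` would force
`|D| ≥ M⁻⁶` (`cross_eq_zero_of_abs_lt`). On the other hand `Pᵢ = A + tᵢ (B - A) + eᵢ` with
`tᵢ ∈ [0,1]` and `eᵢ` of size less than `δ = M⁻⁶ / 10`; expanding `D` bilinearly, the term
`(B - A) × (B - A)` vanishes and what remains is at most `8δ + 8δ² < 10δ = M⁻⁶`
(`abs_cross_lt`). Hence `D = 0`, which is collinearity (`collinear_of_cross_eq_zero`).
-/

/-- The point of the Euclidean plane with the given coordinate functions. -/
noncomputable def toE2 (f : Fin 2 → ℝ) : EuclideanSpace ℝ (Fin 2) :=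
  (WithLp.equiv 2 (Fin 2 → ℝ)).symm f

/-- Twice the signed area of the triangle with vertices `p 0`, `p 1`, `p 2`. -/
def cross (p : Fin 3 → Fin 2 → ℝ) : ℝ :=
  (p 1 0 - p 0 0) * (p 2 1 - p 0 1) - (p 1 1 - p 0 1) * (p 2 0 - p 0 0)

/-- A nonzero `cross` of rational points is at least the reciprocal of the product of the six
denominators, since multiplying by that product gives an integer. -/
lemma cross_eq_zero_of_abs_lt (M : ℕ) (hM : 0 < M) (q : Fin 3 → Fin 2 → ℚ)
    (hden : ∀ i j, (q i j).den ≤ M)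
    (h : |cross fun i j => (q i j : ℝ)| < ((M : ℝ) ^ 6)⁻¹) :
    cross (fun i j => (q i j : ℝ)) = 0 := by
  set D := cross fun i j => (q i j : ℝ) with hD
  by_contra hne
  set N : ℕ := ((q 0 0).den * (q 0 1).den) * ((q 1 0).den * (q 1 1).den) *
    ((q 2 0).den * (q 2 1).den) with hN
  have hNpos : 0 < N := by
    rw [hN]
    positivity
  have hNM : N ≤ M ^ 6 := by
    calc N ≤ (M * M) * (M * M) * (M * M) := by
          rw [hN]; gcongr <;> apply hden
      _ = M ^ 6 := by ring
  obtain ⟨z, hz⟩ : ∃ z : ℤ, D * (N : ℝ) = z := by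
    -- Each monomial of `D` uses distinct coordinates, so each denominator is needed only once.
    have mono : ∀ a b c d e f : ℚ, ∃ z : ℤ, (a * b : ℝ) *
        (a.den * b.den * c.den * d.den * e.den * f.den : ℝ) = z := fun a b c d e f => by
      refine ⟨a.num * b.num * c.den * d.den * e.den * f.den, ?_⟩
      have ha : (a : ℝ) * (a.den : ℝ) = a.num := by exact_mod_cast Rat.mul_den_eq_num a
      have hb : (b : ℝ) * (b.den : ℝ) = b.num := by exact_mod_cast Rat.mul_den_eq_num b
      push_cast
      rw [← ha, ← hb]
      ring
    obtain ⟨z₁, h₁⟩ := mono (q 1 0) (q 2 1) (q 0 0) (q 0 1) (q 1 1) (q 2 0)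
    obtain ⟨z₂, h₂⟩ := mono (q 1 0) (q 0 1) (q 0 0) (q 2 1) (q 1 1) (q 2 0)
    obtain ⟨z₃, h₃⟩ := mono (q 0 0) (q 2 1) (q 1 0) (q 0 1) (q 1 1) (q 2 0)
    obtain ⟨z₄, h₄⟩ := mono (q 1 1) (q 2 0) (q 0 0) (q 0 1) (q 1 0) (q 2 1)
    obtain ⟨z₅, h₅⟩ := mono (q 1 1) (q 0 0) (q 2 0) (q 0 1) (q 1 0) (q 2 1)
    obtain ⟨z₆, h₆⟩ := mono (q 0 1) (q 2 0) (q 0 0) (q 1 1) (q 1 0) (q 2 1)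
    refine ⟨z₁ - z₂ - z₃ - z₄ + z₅ + z₆, ?_⟩
    push_cast
    rw [← h₁, ← h₂, ← h₃, ← h₄, ← h₅, ← h₆, hD, hN, cross]
    push_cast
    ring
  have hNR : (0 : ℝ) < N := by exact_mod_cast hNpos
  have hz0 : z ≠ 0 := by
    rintro rfl
    rw [Int.cast_zero] at hz
    exact (mul_ne_zero hne hNR.ne') hz
  have h1 : (1 : ℝ) ≤ |D| * N := by
    have : (1 : ℝ) ≤ |(z : ℝ)| := by exact_mod_cast Int.one_le_abs hz0
    rwa [← hz, abs_mul, abs_of_pos hNR] at this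
  have hMR : (0 : ℝ) < (M : ℝ) ^ 6 := by positivity
  have h2 : |D| * N ≤ |D| * (M : ℝ) ^ 6 := by
    gcongr
    exact_mod_cast hNM
  have h3 : |D| * (M : ℝ) ^ 6 < 1 := by
    rwa [← lt_inv_mul_iff₀' hMR, mul_one]
  linarith

/-- Three points whose coordinates are within `δ ≤ 1/10` of points `a + tᵢ u` of a segment span a
triangle of small area. The bound comes from four mixed terms of size at most `2δ` and two quadratic terms of
size at most `4δ²`. -/
lemma abs_cross_lt (a u : Fin 2 → ℝ) (hu : ∀ j, |u j| ≤ 1) (t : Fin 3 → ℝ)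
    (ht : ∀ i, t i ∈ Set.Icc (0 : ℝ) 1) (δ : ℝ) (hδ0 : 0 < δ) (hδ : δ ≤ 1 / 10)
    (p : Fin 3 → Fin 2 → ℝ) (hp : ∀ i j, |p i j - (a j + t i * u j)| ≤ δ) :
    |cross p| < 10 * δ := by
  obtain ⟨e, he⟩ : ∃ e : Fin 3 → Fin 2 → ℝ, ∀ i j, p i j = a j + t i * u j + e i j :=
    ⟨fun i j => p i j - (a j + t i * u j), fun i j => by ring⟩
  have heδ : ∀ i j, |e i j| ≤ δ := fun i j => by
    have := hp i j
    rwa [he, add_sub_cancel_left] at this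
  have hdiff : ∀ i j, |e i j - e 0 j| ≤ 2 * δ := fun i j => by
    have := abs_sub (e i j) (e 0 j)
    linarith [heδ i j, heδ 0 j]
  have hts : ∀ i, |t i - t 0| ≤ 1 := fun i => by
    rw [abs_le]
    constructor <;> linarith [(ht i).1, (ht i).2, (ht 0).1, (ht 0).2]
  have hprod : ∀ x y b c : ℝ, |x| ≤ b → |y| ≤ c → |x * y| ≤ b * c := fun x y b c hx hy => by
    rw [abs_mul]
    exact mul_le_mul hx hy (abs_nonneg _) ((abs_nonneg _).trans hx)
  have hlin : ∀ i j k l, |(t i - t 0) * u j * (e k l - e 0 l)| ≤ 1 * 1 * (2 * δ) :=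
    fun i j k l => hprod _ _ _ _ (hprod _ _ _ _ (hts i) (hu j)) (hdiff k l)
  have hquad : ∀ i j k l, |(e i j - e 0 j) * (e k l - e 0 l)| ≤ 2 * δ * (2 * δ) :=
    fun i j k l => hprod _ _ _ _ (hdiff i j) (hdiff k l)
  have hexp : cross p =
      (t 1 - t 0) * u 0 * (e 2 1 - e 0 1) - (t 1 - t 0) * u 1 * (e 2 0 - e 0 0)
      + (t 2 - t 0) * u 1 * (e 1 0 - e 0 0) - (t 2 - t 0) * u 0 * (e 1 1 - e 0 1)
      + (e 1 0 - e 0 0) * (e 2 1 - e 0 1) - (e 1 1 - e 0 1) * (e 2 0 - e 0 0) := by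
    simp only [cross, he]
    ring
  have hδ2 : δ * δ ≤ 1 / 10 * δ := by gcongr
  have l1 := abs_le.1 (hlin 1 0 2 1)
  have l2 := abs_le.1 (hlin 1 1 2 0)
  have l3 := abs_le.1 (hlin 2 1 1 0)
  have l4 := abs_le.1 (hlin 2 0 1 1)
  have m1 := abs_le.1 (hquad 1 0 2 1)
  have m2 := abs_le.1 (hquad 1 1 2 0)
  rw [hexp, abs_lt]
  constructor <;> linarith [l1.1, l1.2, l2.1, l2.2, l3.1, l3.2, l4.1, l4.2, m1.1, m1.2, m2.1, m2.2]

lemma collinear_of_cross_eq_zero (p : Fin 3 → Fin 2 → ℝ) (h : cross p = 0) :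
    Collinear ℝ (Set.range fun i : Fin 3 => toE2 (p i)) := by
  rw [collinear_iff_of_mem (p₀ := toE2 (p 0)) (Set.mem_range_self (0 : Fin 3))]
  unfold cross at h
  -- It suffices to write both edge vectors from `p 0` as multiples of a common `v`.
  suffices H : ∃ v : Fin 2 → ℝ, ∀ i, ∃ r : ℝ, ∀ j, p i j = r * v j + p 0 j by
    obtain ⟨v, hv⟩ := H
    refine ⟨toE2 v, ?_⟩
    rintro _ ⟨i, rfl⟩
    obtain ⟨r, hr⟩ := hv i
    refine ⟨r, ?_⟩
    ext j
    simpa [toE2] using hr j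
  by_cases h0 : p 1 0 - p 0 0 = 0
  · by_cases h1 : p 1 1 - p 0 1 = 0
    · refine ⟨fun j => p 2 j - p 0 j, fun i => ?_⟩
      fin_cases i
      · exact ⟨0, fun j => by simp⟩
      · refine ⟨0, fun j => ?_⟩
        fin_cases j <;> simp <;> linarith
      · exact ⟨1, fun j => by simp⟩
    · refine ⟨fun j => p 1 j - p 0 j, fun i => ?_⟩
      fin_cases i
      · exact ⟨0, fun j => by simp⟩
      · exact ⟨1, fun j => by simp⟩
      · refine ⟨(p 2 1 - p 0 1) / (p 1 1 - p 0 1), fun j => ?_⟩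
        fin_cases j <;> simp <;> field_simp <;> linarith
  · refine ⟨fun j => p 1 j - p 0 j, fun i => ?_⟩
    fin_cases i
    · exact ⟨0, fun j => by simp⟩
    · exact ⟨1, fun j => by simp⟩
    · refine ⟨(p 2 0 - p 0 0) / (p 1 0 - p 0 0), fun j => ?_⟩
      fin_cases j <;> simp <;> field_simp <;> linarith

/-- **toy diophantine remark of Section 4.**  Let `ℓ = [A,B]` be a segment
of length `1` in the Euclidean plane.  If `P₁, P₂, P₃` are rational points with all
coordinate denominators at most `M`, each lying within `ε` of `ℓ` with
`0 < ε < (1/10) M⁻⁶`, then `P₁, P₂, P₃` are collinear. -/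
theorem toy_diophantine
    (A B : EuclideanSpace ℝ (Fin 2)) (hAB : dist A B = 1)
    (M : ℕ) (hM : 0 < M)
    (q : Fin 3 → Fin 2 → ℚ) (hden : ∀ i j, (q i j).den ≤ M)
    (ε : ℝ) (hε0 : 0 < ε) (hεM : ε < (1 / 10) * ((M : ℝ) ^ 6)⁻¹)
    (hclose : ∀ i : Fin 3,
      Metric.infDist (toE2 fun j => (q i j : ℝ)) (segment ℝ A B) ≤ ε) :
    Collinear ℝ (Set.range fun i : Fin 3 => toE2 fun j => (q i j : ℝ)) := by
  apply collinear_of_cross_eq_zero (fun i j => (q i j : ℝ))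
  apply cross_eq_zero_of_abs_lt M hM q hden
  set δ : ℝ := (1 / 10) * ((M : ℝ) ^ 6)⁻¹ with hδ
  have hδ1 : δ ≤ 1 / 10 := by
    have hM1 : (1 : ℝ) ≤ M := by exact_mod_cast hM
    have : ((M : ℝ) ^ 6)⁻¹ ≤ 1 := inv_le_one_of_one_le₀ (one_le_pow₀ hM1)
    linarith
  have hcoord : ∀ (x : EuclideanSpace ℝ (Fin 2)) j, |x j| ≤ ‖x‖ := fun x j => by
    simpa using PiLp.norm_apply_le x j
  -- Working with the strict bound `δ > ε` avoids having to know that `infDist` is attained.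
  have hnear : ∀ i : Fin 3, ∃ t ∈ Set.Icc (0 : ℝ) 1,
      dist (toE2 fun j => (q i j : ℝ)) (A + t • (B - A)) < δ := fun i => by
    obtain ⟨y, hy, hd⟩ := (Metric.infDist_lt_iff ⟨A, left_mem_segment ℝ A B⟩).1
      ((hclose i).trans_lt hεM)
    rw [segment_eq_image'] at hy
    obtain ⟨t, ht, rfl⟩ := hy
    exact ⟨t, ht, hd⟩
  choose t ht hd using hnear
  have := abs_cross_lt (fun j => A j) (fun j => (B - A) j)
    (fun j => (hcoord _ j).trans (by rw [← dist_eq_norm, dist_comm, hAB])) t ht δ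
    (hε0.trans hεM) hδ1 (fun i j => (q i j : ℝ)) (fun i j => by
      have h := (hcoord _ j).trans ((dist_eq_norm _ _).symm.trans_lt (hd i)).le
      simpa [toE2] using h)
  linarith
end

section
/- (Lemma 4.7: points near a proper real subalgebra lie in a proper rational subalgebra) There exist constants c ≥ 1 and c' > 0 such that the following holds: for every ℝ-subalgebra S of E with S ≠ E, and all reals R ≥ 1, M ≥ 1 and ε > 0 satisfying ε·R^c·M^c < c', the set Z := { x ∈ D : ‖x‖ ≤ R, infdist(x, S) ≤ ε, denom_L(x) ≤ M } is contained in a proper ℚ-subalgebra of D, i.e. the ℚ-subalgebra generated by Z is not all of D. -/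
/-!
Suppose the set `Z` generates `D`. Since `dim D = n`, the words of length `n` in `Z ∪ {1}` span `D`
over `ℚ` (`adjoin_le_span_words`), hence `E` over `ℝ`, so `n` of them form a real basis `w` of `E`.
These words have norm `O(R ^ n)` and distance `O(ε R ^ n)` from `S` (`word_near`), and denominators
`O(M ^ n)` with respect to the lattice `Λ` spanned over `ℤ` by the given basis `v` (`word_denom`).

Clearing denominators gives a real basis `u` of `E` inside `Λ`, so its coordinate matrix with
respect to `v` is integral with nonzero determinant, of absolute value at least `1`. A nonzero
linear functional `φ` vanishing on `S` takes small values on `u`; by Cramer's rule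
(`abs_apply_basis_le`) its values on `v` are at most a constant times `ε (R M) ^ (n (n + 1))` times
their own maximum, which is impossible when `ε (R M) ^ (n (n + 1))` is small.
-/

/-- The denominator of `x` relative to a lattice `L`: the least positive integer `m`
with `m • x ∈ L`. -/
noncomputable def latDenom {E : Type*} [Ring E] (L : Submodule ℤ E) (x : E) : ℕ :=
  sInf {m : ℕ | 0 < m ∧ (m : ℤ) • x ∈ L}

open scoped Pointwise

/-- If `Z` generates a `ℚ`-algebra of dimension at most `n`, words of length exactly `n` in
`Z ∪ {1}` already span it: the spans of words of length `k` increase strictly with `k` until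
they stabilise, and once stable they are closed under multiplication by `Z`. -/
lemma adjoin_le_span_words {E : Type*} [Ring E] [Algebra ℚ E] (Z : Set E) (n : ℕ)
    (hfin : FiniteDimensional ℚ (Subalgebra.toSubmodule (Algebra.adjoin ℚ Z)))
    (hn : Module.finrank ℚ (Subalgebra.toSubmodule (Algebra.adjoin ℚ Z)) ≤ n) :
    Subalgebra.toSubmodule (Algebra.adjoin ℚ Z) ≤ Submodule.span ℚ ((insert 1 Z) ^ n) := by
  rw [← Submodule.span_pow]
  set P : Submodule ℚ E := Submodule.span ℚ (insert 1 Z) with hP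
  set A := Algebra.adjoin ℚ Z with hA
  have h1 : (1 : E) ∈ P := Submodule.subset_span (Set.mem_insert _ _)
  have hPA : P ≤ Subalgebra.toSubmodule A := by
    rw [hP, Submodule.span_le]
    rintro x (rfl | hx)
    · exact one_mem A
    · exact Algebra.subset_adjoin hx
  have hle : ∀ k, P ^ k ≤ Subalgebra.toSubmodule A := by
    intro k
    induction k with
    | zero =>
      rw [pow_zero, Submodule.one_le]
      exact one_mem A
    | succ k ih =>
      rw [pow_succ, Submodule.mul_le]
      intro x hx y hy
      exact A.mul_mem (ih hx) (hPA hy)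
  have hmono : ∀ k, P ^ k ≤ P ^ (k + 1) := by
    intro k x hx
    rw [pow_succ]
    simpa using Submodule.mul_mem_mul hx h1
  have hfd : ∀ k, FiniteDimensional ℚ (P ^ k : Submodule ℚ E) := fun k =>
    Submodule.finiteDimensional_of_le (hle k)
  have key : ∀ k, P ^ k = P ^ (k + 1) ∨ k + 1 ≤ Module.finrank ℚ (P ^ (k + 1) : Submodule ℚ E) := by
    intro k
    induction k with
    | zero =>
      by_cases h : P ^ 0 = P ^ (0 + 1)
      · exact Or.inl h
      · right
        have := hfd (0 + 1)
        have := Submodule.finrank_lt_finrank_of_lt (lt_of_le_of_ne (hmono 0) h)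
        omega
    | succ k ih =>
      by_cases h : P ^ (k + 1) = P ^ (k + 1 + 1)
      · exact Or.inl h
      · right
        rcases ih with ih | ih
        · exfalso
          apply h
          rw [pow_succ, ih, ← pow_succ]
        · have := hfd (k + 1 + 1)
          have := Submodule.finrank_lt_finrank_of_lt (lt_of_le_of_ne (hmono (k + 1)) h)
          omega
  have hstab : P ^ n = P ^ (n + 1) := by
    rcases key n with h | h
    · exact h
    · have := Submodule.finrank_mono (hle (n + 1))
      omega
  have hmul : ∀ a ∈ A, ∀ y ∈ P ^ n, y * a ∈ P ^ n := by
    intro a ha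
    induction ha using Algebra.adjoin_induction with
    | mem x hx =>
      intro y hy
      rw [hstab, pow_succ]
      exact Submodule.mul_mem_mul hy (Submodule.subset_span (Set.mem_insert_of_mem _ hx))
    | algebraMap r =>
      intro y hy
      rw [← Algebra.commutes, ← Algebra.smul_def]
      exact Submodule.smul_mem _ _ hy
    | add a b _ _ iha ihb =>
      intro y hy
      rw [mul_add]
      exact add_mem (iha y hy) (ihb y hy)
    | mul a b _ _ iha ihb =>
      intro y hy
      rw [← mul_assoc]
      exact ihb _ (iha y hy)
  have hone : ∀ k, (1 : E) ∈ P ^ k := fun k => by simpa using Submodule.pow_mem_pow P h1 k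
  intro a ha
  simpa using hmul a ha 1 (hone n)

/-- Elements of the `ℚ`-span of a set have a denominator with respect to its `ℤ`-span. -/
lemma exists_denom {E : Type*} [Ring E] [Algebra ℚ E] (s : Set E) {x : E}
    (hx : x ∈ Submodule.span ℚ s) :
    ∃ q : ℕ, 0 < q ∧ (q : ℤ) • x ∈ Submodule.span ℤ s := by
  induction hx using Submodule.span_induction with
  | mem x hx => exact ⟨1, one_pos, by simpa using Submodule.subset_span hx⟩
  | zero => exact ⟨1, one_pos, by simp⟩
  | add x y _ _ ihx ihy =>
    obtain ⟨q, hq, h⟩ := ihx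
    obtain ⟨r, hr, h'⟩ := ihy
    refine ⟨q * r, Nat.mul_pos hq hr, ?_⟩
    have e : ((q * r : ℕ) : ℤ) • (x + y) = (r : ℤ) • ((q : ℤ) • x) + (q : ℤ) • ((r : ℤ) • y) := by
      rw [smul_add, smul_smul, smul_smul]
      push_cast
      rw [mul_comm (r : ℤ)]
    rw [e]
    exact add_mem (Submodule.smul_mem _ _ h) (Submodule.smul_mem _ _ h')
  | smul a x _ ih =>
    obtain ⟨q, hq, h⟩ := ih
    refine ⟨a.den * q, Nat.mul_pos a.den_pos hq, ?_⟩
    have e : ((a.den * q : ℕ) : ℤ) • (a • x) = a.num • ((q : ℤ) • x) := by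
      rw [← Int.cast_smul_eq_zsmul ℚ, ← Int.cast_smul_eq_zsmul ℚ, ← Int.cast_smul_eq_zsmul ℚ,
        smul_smul, smul_smul]
      congr 1
      have := Rat.den_mul_eq_num a
      push_cast
      rw [mul_right_comm, this]
    rw [e]
    exact Submodule.smul_mem _ _ h

/-- Finitely many elements of the `ℚ`-span of `v` have a common denominator with respect to the
`ℤ`-span of `v`. -/
lemma exists_common_denom {E : Type*} [Ring E] [Algebra ℚ E] {n : ℕ} (v : Fin n → E)
    (T : Finset E) (hT : ∀ t ∈ T, t ∈ Submodule.span ℚ (Set.range v)) :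
    ∃ q : ℕ, 0 < q ∧ ∀ t ∈ T, (q : ℤ) • t ∈ Submodule.span ℤ (Set.range v) := by
  classical
  induction T using Finset.induction_on with
  | empty => exact ⟨1, one_pos, by simp⟩
  | insert a T _ ih =>
    obtain ⟨q, hq, h⟩ := ih fun t ht => hT t (Finset.mem_insert_of_mem ht)
    obtain ⟨r, hr, h'⟩ := exists_denom _ (hT a (Finset.mem_insert_self _ _))
    refine ⟨q * r, Nat.mul_pos hq hr, fun t ht => ?_⟩
    push_cast
    rcases Finset.mem_insert.1 ht with rfl | ht
    · rw [mul_smul]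
      exact Submodule.smul_mem _ _ h'
    · rw [mul_comm, mul_smul]
      exact Submodule.smul_mem _ _ (h t ht)

/-- Quantitative Cramer's rule: if the linearly independent `u i` are integral combinations of the
basis `b` with coefficients at most `X`, the determinant of the coefficient matrix is a nonzero
integer, so a functional small on the `u i` is small on `b`. -/
lemma abs_apply_basis_le {E : Type*} [AddCommGroup E] [Module ℝ E] {n : ℕ}
    (b : Module.Basis (Fin n) ℝ E) (u : Fin n → E) (hu : LinearIndependent ℝ u)
    (huZ : ∀ i, u i ∈ Submodule.span ℤ (Set.range b)) {X δ : ℝ} (hX1 : 1 ≤ X)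
    (hX : ∀ i j, |b.repr (u i) j| ≤ X) (φ : E →ₗ[ℝ] ℝ) (hφ : ∀ i, |φ (u i)| ≤ δ) (j : Fin n) :
    |φ (b j)| ≤ n * (n.factorial * X ^ n * δ) := by
  have h0 : ∀ i, ∃ a : Fin n → ℤ, ∑ k, a k • b k = u i := fun i =>
    (Submodule.mem_span_range_iff_exists_fun ℤ).1 (huZ i)
  choose a ha using h0
  have ha' : ∀ i, ∑ k, (a i k : ℝ) • b k = u i := by
    intro i
    rw [← ha i]
    simp only [Int.cast_smul_eq_zsmul]
  let A₀ : Matrix (Fin n) (Fin n) ℤ := Matrix.of a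
  let A : Matrix (Fin n) (Fin n) ℝ := A₀.map (Int.castRingHom ℝ)
  have hA : ∀ i k, A i k = a i k := fun i k => rfl
  have hArepr : ∀ i k, A i k = b.repr (u i) k := by
    intro i k
    rw [hA, ← ha' i, b.repr_sum_self]
  have hdet : A.det = (A₀.det : ℝ) := ((Int.castRingHom ℝ).map_det A₀).symm
  have hne : A.det ≠ 0 := by
    intro h
    obtain ⟨c, hc, hc0⟩ := Matrix.exists_vecMul_eq_zero_iff.2 h
    apply hc
    have hsum : ∑ i, c i • u i = 0 := by
      simp_rw [← ha', Finset.smul_sum, smul_smul]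
      rw [Finset.sum_comm]
      apply Finset.sum_eq_zero
      intro k _
      rw [← Finset.sum_smul]
      have : ∑ i, c i * (a i k : ℝ) = 0 := congrFun hc0 k
      rw [this, zero_smul]
    funext i
    exact Fintype.linearIndependent_iff.1 hu c hsum i
  have hdet1 : 1 ≤ |A.det| := by
    rw [hdet] at hne ⊢
    rw [← Int.cast_abs]
    exact_mod_cast Int.one_le_abs (by exact_mod_cast hne)
  have hadj : ∀ k i, |A.adjugate k i| ≤ n.factorial * X ^ n := by
    intro k i
    rw [Matrix.adjugate_apply]
    have := Matrix.det_le (A := A.updateRow i (Pi.single k 1)) (abv := AbsoluteValue.abs) (x := X) ?_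
    · simpa using this
    · intro r s
      simp only [AbsoluteValue.abs_apply]
      rw [Matrix.updateRow_apply]
      split_ifs with h
      · rw [Pi.single_apply]
        split_ifs <;> simp <;> linarith
      · rw [hArepr]
        exact hX r s
  have hmul : A.mulVec (fun k => φ (b k)) = fun i => φ (u i) := by
    funext i
    rw [← ha' i, map_sum]
    simp [Matrix.mulVec, dotProduct, hA]
  have hcr : A.det * φ (b j) = ∑ i, A.adjugate j i * φ (u i) := by
    have h := congrArg (fun w => A.adjugate.mulVec w j) hmul
    simp only [Matrix.mulVec_mulVec, Matrix.adjugate_mul, Matrix.smul_mulVec,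
      Matrix.one_mulVec, Pi.smul_apply, smul_eq_mul] at h
    rw [h]
    rfl
  calc |φ (b j)| ≤ |A.det| * |φ (b j)| := le_mul_of_one_le_left (abs_nonneg _) hdet1
    _ = |∑ i, A.adjugate j i * φ (u i)| := by rw [← abs_mul, hcr]
    _ ≤ ∑ i, |A.adjugate j i * φ (u i)| := Finset.abs_sum_le_sum_abs _ _
    _ ≤ ∑ _i : Fin n, n.factorial * X ^ n * δ := by
      apply Finset.sum_le_sum
      intro i _
      rw [abs_mul]
      exact mul_le_mul (hadj j i) (hφ i) (abs_nonneg _) (by positivity)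
    _ = n * (n.factorial * X ^ n * δ) := by simp

/-- Words of length `k` in a set of elements of norm at most `B`, each approximated within `η` by
an element of `S` of norm at most `B`, are themselves bounded and close to `S`. -/
lemma word_near {E : Type*} [NormedRing E] [NormedAlgebra ℝ E] (S : Subalgebra ℝ E) (Y : Set E)
    {K B η : ℝ} (hK : ‖(1 : E)‖ ≤ K) (hB : 1 ≤ B) (hη : 0 ≤ η)
    (hY : ∀ x ∈ Y, ‖x‖ ≤ B ∧ ∃ s ∈ S, ‖s‖ ≤ B ∧ ‖x - s‖ ≤ η) (k : ℕ) :
    ∀ w ∈ Y ^ k, ‖w‖ ≤ K * B ^ k ∧ ∃ s ∈ S, ‖s‖ ≤ K * B ^ k ∧ ‖w - s‖ ≤ k * (K * B ^ k * η) := by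
  have hK0 : 0 ≤ K := (norm_nonneg _).trans hK
  induction k with
  | zero =>
    intro w hw
    have : w = 1 := by simpa using hw
    subst this
    exact ⟨by simpa using hK, 1, one_mem S, by simpa using hK, by simp⟩
  | succ k ih =>
    intro w hw
    rw [pow_succ] at hw
    obtain ⟨w, hw', x, hx, rfl⟩ := Set.mem_mul.1 hw
    obtain ⟨hwn, s, hs, hsn, hws⟩ := ih w hw'
    obtain ⟨hxn, t, ht, htn, hxt⟩ := hY x hx
    have hpow : B ^ k ≤ B ^ (k + 1) := pow_le_pow_right₀ hB (Nat.le_succ k)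
    have hB0 : 0 ≤ B := by linarith
    refine ⟨?_, s * t, mul_mem hs ht, ?_, ?_⟩
    · calc ‖w * x‖ ≤ ‖w‖ * ‖x‖ := norm_mul_le _ _
        _ ≤ (K * B ^ k) * B := by gcongr
        _ = K * B ^ (k + 1) := by ring
    · calc ‖s * t‖ ≤ ‖s‖ * ‖t‖ := norm_mul_le _ _
        _ ≤ (K * B ^ k) * B := by gcongr
        _ = K * B ^ (k + 1) := by ring
    · calc ‖w * x - s * t‖ = ‖(w - s) * x + s * (x - t)‖ := by congr 1; noncomm_ring
        _ ≤ ‖w - s‖ * ‖x‖ + ‖s‖ * ‖x - t‖ :=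
          (norm_add_le _ _).trans (add_le_add (norm_mul_le _ _) (norm_mul_le _ _))
        _ ≤ (k * (K * B ^ k * η)) * B + (K * B ^ k) * η := by gcongr
        _ ≤ (k * (K * B ^ k * η)) * B + (K * B ^ (k + 1)) * η := by gcongr
        _ = (k + 1 : ℕ) * (K * B ^ (k + 1) * η) := by push_cast; ring

/-- Denominator bound for words. The lattice `Λ` need not be a ring: `q` clears the denominators of
products of its elements, and of `1`. -/
lemma word_denom {E : Type*} [Ring E] (Λ : Submodule ℤ E) (Y : Set E) (q : ℕ) (hq : 0 < q)
    {N : ℝ} (h1 : (q : ℤ) • (1 : E) ∈ Λ)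
    (hmul : ∀ x ∈ Λ, ∀ y ∈ Λ, (q : ℤ) • (x * y) ∈ Λ)
    (hY : ∀ x ∈ Y, ∃ m : ℕ, 0 < m ∧ (m : ℝ) ≤ N ∧ (m : ℤ) • x ∈ Λ) (k : ℕ) :
    ∀ w ∈ Y ^ k, ∃ m : ℕ, 0 < m ∧ (m : ℝ) ≤ q * (q * N) ^ k ∧ (m : ℤ) • w ∈ Λ := by
  induction k with
  | zero =>
    intro w hw
    have : w = 1 := by simpa using hw
    subst this
    exact ⟨q, hq, by simp, h1⟩
  | succ k ih =>
    intro w hw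
    rw [pow_succ] at hw
    obtain ⟨w, hw', x, hx, rfl⟩ := Set.mem_mul.1 hw
    obtain ⟨m, hm, hmN, hmw⟩ := ih w hw'
    obtain ⟨r, hr, hrN, hrx⟩ := hY x hx
    refine ⟨q * (m * r), by positivity, ?_, ?_⟩
    · push_cast
      calc (q : ℝ) * (m * r) ≤ q * ((q * (q * N) ^ k) * N) := by
            have : (0 : ℝ) ≤ m := by positivity
            gcongr
            exact this.trans hmN
        _ = q * (q * N) ^ (k + 1) := by ring
    · have := hmul _ hmw _ hrx
      rw [smul_mul_smul_comm, smul_smul] at this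
      push_cast
      exact this

/-- **Lemma 4.7: points near a proper real subalgebra lie in a proper
rational subalgebra.**  `E` is a finite-dimensional normed `ℝ`-algebra with
submultiplicative norm, `D` a `ℚ`-subalgebra of `E` having a `ℚ`-basis which is an
`ℝ`-basis of `E`, and `L ⊆ D` a finitely generated `ℤ`-lattice spanning `D` over `ℚ`.
Then there are constants `c ≥ 1` and `c' > 0` such that: for every proper
`ℝ`-subalgebra `S ⊊ E` and all `R, M ≥ 1`, `ε > 0` with `ε R^c M^c < c'`, the set
`Z = {x ∈ D : ‖x‖ ≤ R, infdist(x,S) ≤ ε, denom_L(x) ≤ M}` generates a proper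
`ℚ`-subalgebra of `D`. -/
theorem near_real_subalgebra_in_rational_subalgebra
    {E : Type*} [NormedRing E] [NormedAlgebra ℝ E] [FiniteDimensional ℝ E]
    [Algebra ℚ E] [IsScalarTower ℚ ℝ E]
    (D : Subalgebra ℚ E)
    (n : ℕ) (v : Fin n → E) (hvD : ∀ i, v i ∈ D)
    (hvQind : LinearIndependent ℚ v)
    (hvQspan : Submodule.span ℚ (Set.range v) = Subalgebra.toSubmodule D)
    (hvRind : LinearIndependent ℝ v)
    (hvRspan : Submodule.span ℝ (Set.range v) = ⊤)
    (L : Submodule ℤ E) (hLfg : L.FG) (hLD : (L : Set E) ⊆ (D : Set E))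
    (hLspan : Submodule.span ℚ (L : Set E) = Subalgebra.toSubmodule D) :
    ∃ c c' : ℝ, 1 ≤ c ∧ 0 < c' ∧
      ∀ S : Subalgebra ℝ E, S ≠ ⊤ →
        ∀ R M ε : ℝ, 1 ≤ R → 1 ≤ M → 0 < ε → ε * R ^ c * M ^ c < c' →
          Algebra.adjoin ℚ
            {x : E | x ∈ D ∧ ‖x‖ ≤ R ∧ Metric.infDist x (S : Set E) ≤ ε ∧
              (latDenom L x : ℝ) ≤ M} ≠ D := by
  classical
  let b : Module.Basis (Fin n) ℝ E := Module.Basis.mk hvRind hvRspan.ge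
  have hb : ⇑b = v := Module.Basis.coe_mk _ _
  -- `C₀` bounds the coordinate functionals of `b`.
  obtain ⟨C₀, hC₀1, hC₀⟩ : ∃ C₀ : ℝ, 1 ≤ C₀ ∧ ∀ y j, |b.repr y j| ≤ C₀ * ‖y‖ := by
    let g : E →L[ℝ] (Fin n → ℝ) := LinearMap.toContinuousLinearMap b.equivFun.toLinearMap
    refine ⟨max 1 ‖g‖, le_max_left _ _, fun y j => ?_⟩
    have h1 : |b.repr y j| ≤ ‖g y‖ := norm_le_pi_norm (g y) j
    exact h1.trans ((g.le_opNorm y).trans (by gcongr; exact le_max_right _ _))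
  obtain ⟨T, hTL⟩ := hLfg
  have hDspan : ∀ x ∈ D, x ∈ Submodule.span ℚ (Set.range v) := by
    intro x hx
    rw [hvQspan]
    exact hx
  -- `q` clears the denominators of generators of `L`, of the structure constants and of `1`.
  obtain ⟨q, hq, hqT⟩ := exists_common_denom v
      (T ∪ (Finset.univ.image fun p : Fin n × Fin n => v p.1 * v p.2) ∪ {1}) (by
    intro t ht
    apply hDspan
    simp only [Finset.mem_union, Finset.mem_image, Finset.mem_univ, true_and,
      Finset.mem_singleton] at ht
    rcases ht with (ht | ⟨p, rfl⟩) | rfl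
    · apply hLD
      rw [← hTL]
      exact Submodule.subset_span ht
    · exact mul_mem (hvD _) (hvD _)
    · exact one_mem D)
  set Λ := Submodule.span ℤ (Set.range v) with hΛ
  have hqL : ∀ l ∈ L, (q : ℤ) • l ∈ Λ := by
    intro l hl
    rw [← hTL] at hl
    induction hl using Submodule.span_induction with
    | mem x hx => exact hqT x (by simp [Finset.mem_coe.1 hx])
    | zero => simp
    | add x y _ _ hx hy => rw [smul_add]; exact add_mem hx hy
    | smul a x _ hx => rw [smul_comm]; exact Submodule.smul_mem _ _ hx
  have hq1 : (q : ℤ) • (1 : E) ∈ Λ := hqT 1 (by simp)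
  have hqmul : ∀ x ∈ Λ, ∀ y ∈ Λ, (q : ℤ) • (x * y) ∈ Λ := by
    intro x hx y hy
    induction hx, hy using Submodule.span_induction₂ with
    | mem_mem x y hx hy =>
      obtain ⟨i, rfl⟩ := hx
      obtain ⟨j, rfl⟩ := hy
      apply hqT
      simp only [Finset.mem_union, Finset.mem_image, Finset.mem_univ, true_and]
      exact Or.inl (Or.inr ⟨(i, j), rfl⟩)
    | zero_left y hy => simp
    | zero_right x hx => simp
    | add_left x y z _ _ _ h h' => rw [add_mul, smul_add]; exact add_mem h h'
    | add_right x y z _ _ _ h h' => rw [mul_add, smul_add]; exact add_mem h h'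
    | smul_left r x y _ _ h => rw [smul_mul_assoc, smul_comm]; exact Submodule.smul_mem _ _ h
    | smul_right r x y _ _ h => rw [mul_smul_comm, smul_comm]; exact Submodule.smul_mem _ _ h
  have hq1' : (1 : ℝ) ≤ q := by exact_mod_cast hq
  -- The minimum defining `latDenom` is attained on `D`.
  have hden : ∀ x ∈ D, 0 < latDenom L x ∧ (latDenom L x : ℤ) • x ∈ L := by
    intro x hx
    have hne : {m : ℕ | 0 < m ∧ (m : ℤ) • x ∈ L}.Nonempty := by
      have hx' : x ∈ Submodule.span ℚ (L : Set E) := by rw [hLspan]; exact hx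
      obtain ⟨k, hk, hkx⟩ := exists_denom _ hx'
      rw [Submodule.span_eq] at hkx
      exact ⟨k, hk, hkx⟩
    exact Nat.sInf_mem hne
  set K : ℝ := max 1 ‖(1 : E)‖ with hKdef
  have hK1 : 1 ≤ K := le_max_left _ _
  have hK : ‖(1 : E)‖ ≤ K := le_max_right _ _
  -- `p` and `C` are such that failure of the conclusion forces `1 ≤ C * (ε * R ^ p * M ^ p)`.
  set p : ℕ := n * (n + 1) with hp
  set C : ℝ := n * n.factorial * (C₀ * q ^ (2 * n + 1) * K * (3 * K) ^ n) ^ n *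
    (q ^ (2 * n + 1) * (n * C₀ * (n * (K * (3 * K) ^ n * 2)))) with hC
  have hC0 : 0 ≤ C := by positivity
  refine ⟨p + 1, min 1 (1 / (C + 1)), by simp, by positivity, ?_⟩
  intro S hS R M ε hR hM hε hlt hadj
  have hR0 : 0 < R := by linarith
  have hM0 : 0 < M := by linarith
  have hRc : R ^ p ≤ R ^ ((p : ℝ) + 1) := by
    rw [← Real.rpow_natCast]
    exact Real.rpow_le_rpow_of_exponent_le hR (by linarith)
  have hMc : M ^ p ≤ M ^ ((p : ℝ) + 1) := by
    rw [← Real.rpow_natCast]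
    exact Real.rpow_le_rpow_of_exponent_le hM (by linarith)
  have hlt' : ε * R ^ p * M ^ p < min 1 (1 / (C + 1)) :=
    lt_of_le_of_lt (by gcongr) hlt
  have hε1 : ε ≤ 1 := by
    have h1 : ε * 1 * 1 ≤ ε * R ^ p * M ^ p := by
      gcongr
      · exact one_le_pow₀ hR
      · exact one_le_pow₀ hM
    have := hlt'.le.trans (min_le_left _ _)
    linarith
  set Z : Set E := {x : E | x ∈ D ∧ ‖x‖ ≤ R ∧ Metric.infDist x (S : Set E) ≤ ε ∧
              (latDenom L x : ℝ) ≤ M} with hZ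
  set Y : Set E := insert 1 Z with hYdef
  set B : ℝ := 3 * K * R with hBdef
  have hKR : K ≤ K * R := le_mul_of_one_le_right (by linarith) hR
  have hRK : R ≤ K * R := le_mul_of_one_le_left (by linarith) hK1
  have hB1 : 1 ≤ B := by rw [hBdef]; linarith
  have hYnear : ∀ x ∈ Y, ‖x‖ ≤ B ∧ ∃ s ∈ S, ‖s‖ ≤ B ∧ ‖x - s‖ ≤ 2 * ε := by
    rintro x (rfl | ⟨_, hxR, hxS, _⟩)
    · have : ‖(1 : E)‖ ≤ B := by rw [hBdef]; linarith
      exact ⟨this, 1, one_mem S, this, by simpa using hε.le⟩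
    · obtain ⟨s, hs, hxs⟩ := (Metric.infDist_lt_iff ⟨1, one_mem S⟩).1
        (show Metric.infDist x (S : Set E) < 2 * ε by linarith)
      rw [dist_eq_norm] at hxs
      have hsn : ‖s‖ ≤ ‖x‖ + ‖x - s‖ := by
        simpa [norm_sub_rev] using norm_add_le x (s - x)
      exact ⟨by rw [hBdef]; linarith, s, hs, by rw [hBdef]; linarith, hxs.le⟩
  have hYden : ∀ x ∈ Y, ∃ m : ℕ, 0 < m ∧ (m : ℝ) ≤ q * M ∧ (m : ℤ) • x ∈ Λ := by
    rintro x (rfl | ⟨hxD, _, _, hxM⟩)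
    · exact ⟨q, hq, le_mul_of_one_le_right (by linarith) hM, hq1⟩
    · refine ⟨q * latDenom L x, Nat.mul_pos hq (hden x hxD).1, ?_, ?_⟩
      · push_cast
        gcongr
      · push_cast
        rw [mul_smul]
        exact hqL _ (hden x hxD).2
  have hnear := word_near S Y hK hB1 (by positivity) hYnear n
  have hdenom := word_denom Λ Y q hq hq1 hqmul hYden n
  -- Words of length `n` span `E` over `ℝ`, hence contain a real basis.
  have hfin : FiniteDimensional ℚ (Subalgebra.toSubmodule D) := by
    rw [← hvQspan]
    exact FiniteDimensional.span_of_finite ℚ (Set.finite_range v)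
  have hrank : Module.finrank ℚ (Subalgebra.toSubmodule D) ≤ n := by
    rw [← hvQspan]
    exact (finrank_range_le_card (R := ℚ) v).trans_eq (Fintype.card_fin n)
  have hspanQ : Subalgebra.toSubmodule D ≤ Submodule.span ℚ (Y ^ n) := by
    rw [← hadj] at hfin hrank ⊢
    exact adjoin_le_span_words Z n hfin hrank
  have hspanR : Submodule.span ℝ (Y ^ n) = ⊤ := by
    rw [eq_top_iff, ← hvRspan, Submodule.span_le]
    rintro _ ⟨i, rfl⟩
    exact Submodule.span_le_restrictScalars ℚ ℝ _ (hspanQ (hvD i))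
  have hfr : Module.finrank ℝ E = n := by simpa using Module.finrank_eq_card_basis b
  obtain ⟨w, hwY, hwind⟩ : ∃ w : Fin n → E, (∀ i, w i ∈ Y ^ n) ∧ LinearIndependent ℝ w := by
    obtain ⟨f, hf, _, hfi⟩ := Submodule.exists_fun_fin_finrank_span_eq ℝ (Y ^ n)
    have hc : n = Module.finrank ℝ (Submodule.span ℝ (Y ^ n)) := by
      rw [hspanR, finrank_top, hfr]
    exact ⟨f ∘ Fin.cast hc, fun i => hf _, hfi.comp _ (Fin.cast_injective hc)⟩
  choose m hm0 hmle hmΛ using fun i => hdenom (w i) (hwY i)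
  set u : Fin n → E := fun i => (m i : ℝ) • w i with hu
  have hm0' : ∀ i, (m i : ℝ) ≠ 0 := fun i => by exact_mod_cast (hm0 i).ne'
  have huind : LinearIndependent ℝ u := by
    have := hwind.units_smul (fun i => Units.mk0 (m i : ℝ) (hm0' i))
    exact this
  have huΛ : ∀ i, u i ∈ Submodule.span ℤ (Set.range b) := by
    intro i
    rw [hb]
    have : u i = (m i : ℤ) • w i := by
      rw [← Int.cast_smul_eq_zsmul ℝ]
      simp [hu]
    rw [this]
    exact hmΛ i
  -- A functional vanishing on `S`, and the basis vector where it is largest.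
  obtain ⟨φ, hφ0, hφS⟩ := Submodule.exists_le_ker_of_lt_top (Subalgebra.toSubmodule S)
    (lt_top_iff_ne_top.2 fun h => hS (Algebra.toSubmodule_eq_top.1 h))
  obtain ⟨i₀, hi₀⟩ : ∃ i, φ (b i) ≠ 0 := by
    by_contra! h
    exact hφ0 (b.ext h)
  obtain ⟨j, -, hj⟩ := Finset.exists_max_image Finset.univ (fun i => |φ (b i)|)
    ⟨i₀, Finset.mem_univ _⟩
  set F := |φ (b j)| with hF
  have hF0 : 0 < F := (abs_pos.2 hi₀).trans_le (hj i₀ (Finset.mem_univ _))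
  have hφle : ∀ y, |φ y| ≤ n * C₀ * F * ‖y‖ := by
    intro y
    calc |φ y| = |∑ i, b.repr y i * φ (b i)| := by
          conv_lhs => rw [← b.sum_repr y, map_sum]
          simp
      _ ≤ ∑ i, |b.repr y i * φ (b i)| := Finset.abs_sum_le_sum_abs _ _
      _ ≤ ∑ _i : Fin n, C₀ * ‖y‖ * F := by
          apply Finset.sum_le_sum
          intro i hi
          rw [abs_mul]
          exact mul_le_mul (hC₀ y i) (hj i hi) (abs_nonneg _) (by positivity)
      _ = n * C₀ * F * ‖y‖ := by simp; ring
  set Q : ℝ := q * (q * (q * M)) ^ n with hQ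
  have hQ1 : 1 ≤ Q := by
    have h1 : 1 ≤ q * M := one_le_mul_of_one_le_of_one_le hq1' hM
    exact one_le_mul_of_one_le_of_one_le hq1'
      (one_le_pow₀ (one_le_mul_of_one_le_of_one_le hq1' h1))
  have hKB1 : 1 ≤ K * B ^ n := one_le_mul_of_one_le_of_one_le hK1 (one_le_pow₀ hB1)
  have hX : ∀ i k, |b.repr (u i) k| ≤ C₀ * (Q * (K * B ^ n)) := by
    intro i k
    refine (hC₀ _ _).trans ?_
    rw [hu, norm_smul, Real.norm_natCast]
    gcongr
    · exact hmle i
    · exact (hnear _ (hwY i)).1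
  have hX1 : 1 ≤ C₀ * (Q * (K * B ^ n)) := one_le_mul_of_one_le_of_one_le hC₀1
    (one_le_mul_of_one_le_of_one_le hQ1 hKB1)
  have hφu : ∀ i, |φ (u i)| ≤ Q * (n * C₀ * F * (n * (K * B ^ n * (2 * ε)))) := by
    intro i
    obtain ⟨s, hs, _, hws⟩ := (hnear _ (hwY i)).2
    have hs0 : φ s = 0 := hφS hs
    have hw : |φ (w i)| ≤ n * C₀ * F * (n * (K * B ^ n * (2 * ε))) := by
      have : φ (w i) = φ (w i - s) := by rw [map_sub, hs0, sub_zero]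
      rw [this]
      refine (hφle _).trans ?_
      gcongr
    rw [hu, map_smul, smul_eq_mul, abs_mul, Nat.abs_cast]
    exact mul_le_mul (hmle i) hw (abs_nonneg _) (by linarith)
  have hmain := abs_apply_basis_le b u huind huΛ hX1 hX φ hφu j
  rw [← hF] at hmain
  have heq : n * (n.factorial * (C₀ * (Q * (K * B ^ n))) ^ n *
      (Q * (n * C₀ * F * (n * (K * B ^ n * (2 * ε)))))) = C * (ε * R ^ p * M ^ p) * F := by
    have hpR : ∀ x : ℝ, x ^ p = (x ^ n) ^ n * x ^ n := by
      intro x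
      rw [hp, Nat.mul_succ, pow_add, pow_mul]
    have e1 : Q = q ^ (2 * n + 1) * M ^ n := by
      rw [hQ, mul_pow, mul_pow]; ring
    have e2 : B ^ n = (3 * K) ^ n * R ^ n := by rw [hBdef, mul_pow]
    rw [hpR, hpR, e1, e2, hC]
    have e3 : C₀ * (q ^ (2 * n + 1) * M ^ n * (K * ((3 * K) ^ n * R ^ n))) =
      (C₀ * q ^ (2 * n + 1) * K * (3 * K) ^ n) * (R ^ n * M ^ n) := by ring
    rw [e3, mul_pow, mul_pow (R ^ n)]
    generalize (C₀ * q ^ (2 * n + 1) * K * (3 * K) ^ n) ^ n = t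
    generalize (3 * K) ^ n = t'
    generalize (q : ℝ) ^ (2 * n + 1) = t''
    ring
  rw [heq] at hmain
  have hge : 1 ≤ C * (ε * R ^ p * M ^ p) := by
    by_contra! h
    nlinarith
  have hfin' : ε * R ^ p * M ^ p < 1 / (C + 1) := hlt'.trans_le (min_le_right _ _)
  rw [lt_div_iff₀ (by linarith)] at hfin'
  have : 0 < ε * R ^ p * M ^ p := by positivity
  nlinarith
end

section
/- (Core of Lemma 4.3 over ℂ) Let n ≥ 1 and let S be a set of n×n complex matrices. Suppose that for every subset T ⊆ S with at most n+1 elements there exists an invertible n×n complex matrix P such that P⁻¹·t·P is diagonal for every t ∈ T. Then there exists a single invertible n×n complex matrix P such that P⁻¹·s·P is diagonal for every s ∈ S. -/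
/-!
The matrices `A` with `P⁻¹ * A * P` diagonal form a linear subspace of dimension at most `n`.
Hence a linearly independent subset of `S` has at most `n` elements: otherwise `n + 1` of its
elements would be simultaneously diagonalizable, and so would lie in such a subspace. A subset
of `S` that is a basis of the span of `S` is therefore diagonalized by some `P`, and the same `P`
diagonalizes every element of its span, in particular every element of `S`. Passing to linear
spans suffices here; the algebras generated by subsets of `S` are not needed.
-/

/-- The linear map `d ↦ P * diagonal d * P⁻¹`. For invertible `P` its range consists of the
matrices diagonalized by `P`. -/
noncomputable def conjDiagonal {n : ℕ} (P : Matrix (Fin n) (Fin n) ℂ) :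
    (Fin n → ℂ) →ₗ[ℂ] Matrix (Fin n) (Fin n) ℂ :=
  LinearMap.mulRight ℂ P⁻¹ ∘ₗ LinearMap.mulLeft ℂ P ∘ₗ Matrix.diagonalLinearMap (Fin n) ℂ ℂ

lemma conjDiagonal_apply {n : ℕ} (P : Matrix (Fin n) (Fin n) ℂ) (d : Fin n → ℂ) :
    conjDiagonal P d = P * Matrix.diagonal d * P⁻¹ := rfl

lemma mem_range_conjDiagonal {n : ℕ} {P : Matrix (Fin n) (Fin n) ℂ} (hP : IsUnit P.det)
    (A : Matrix (Fin n) (Fin n) ℂ) :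
    A ∈ LinearMap.range (conjDiagonal P) ↔ (P⁻¹ * A * P).IsDiag := by
  constructor
  · rintro ⟨d, rfl⟩
    have h : P⁻¹ * (P * Matrix.diagonal d * P⁻¹) * P = Matrix.diagonal d := by
      rw [Matrix.mul_assoc P, Matrix.nonsing_inv_mul_cancel_left _ _ hP,
        Matrix.nonsing_inv_mul_cancel_right _ _ hP]
    rw [conjDiagonal_apply, h]
    exact Matrix.isDiag_diagonal d
  · intro h
    refine ⟨(P⁻¹ * A * P).diag, ?_⟩
    rw [conjDiagonal_apply, h.diagonal_diag, Matrix.mul_assoc P⁻¹,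
      Matrix.mul_nonsing_inv_cancel_left _ _ hP, Matrix.mul_nonsing_inv_cancel_right _ _ hP]

lemma card_le_of_linearIndepOn_of_isDiag {n : ℕ} {P : Matrix (Fin n) (Fin n) ℂ}
    (hP : IsUnit P.det) (T : Finset (Matrix (Fin n) (Fin n) ℂ))
    (hT : LinearIndepOn ℂ id (T : Set (Matrix (Fin n) (Fin n) ℂ)))
    (hd : ∀ t ∈ T, (P⁻¹ * t * P).IsDiag) : T.card ≤ n := by
  have hle : Submodule.span ℂ (T : Set (Matrix (Fin n) (Fin n) ℂ)) ≤
      LinearMap.range (conjDiagonal P) :=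
    Submodule.span_le.2 fun t ht => (mem_range_conjDiagonal hP t).2 (hd t ht)
  calc T.card = Module.finrank ℂ (Submodule.span ℂ (T : Set (Matrix (Fin n) (Fin n) ℂ))) :=
        (finrank_span_finset_eq_card hT).symm
    _ ≤ Module.finrank ℂ (LinearMap.range (conjDiagonal P)) := Submodule.finrank_mono hle
    _ ≤ Module.finrank ℂ (Fin n → ℂ) := LinearMap.finrank_range_le _
    _ = n := by simp

/-- **core of Lemma 4.3 over ℂ.**  Let `S` be a set of `n × n` complex
matrices such that every subset `T ⊆ S` with at most `n + 1` elements is simultaneously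
diagonalizable.  Then `S` itself is simultaneously diagonalizable. -/
theorem simultaneously_diagonalizable_of_small_subsets
    {n : ℕ} (hn : 1 ≤ n) (S : Set (Matrix (Fin n) (Fin n) ℂ))
    (hsmall : ∀ T : Finset (Matrix (Fin n) (Fin n) ℂ), ↑T ⊆ S → T.card ≤ n + 1 →
      ∃ P : Matrix (Fin n) (Fin n) ℂ, IsUnit P.det ∧
        ∀ t ∈ T, (P⁻¹ * t * P).IsDiag) :
    ∃ P : Matrix (Fin n) (Fin n) ℂ, IsUnit P.det ∧
      ∀ s ∈ S, (P⁻¹ * s * P).IsDiag := by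
  obtain ⟨b, hbS, hspan, hli⟩ := exists_linearIndependent ℂ S
  have hfin : b.Finite := hli.setFinite
  lift b to Finset (Matrix (Fin n) (Fin n) ℂ) using hfin
  have hcard : b.card ≤ n := by
    by_contra! hlt
    obtain ⟨T, hTb, hTcard⟩ := Finset.exists_subset_card_eq (show n + 1 ≤ b.card from hlt)
    have hTb' : (T : Set (Matrix (Fin n) (Fin n) ℂ)) ⊆ b := Finset.coe_subset.2 hTb
    obtain ⟨P, hP, hd⟩ := hsmall T (hTb'.trans hbS) hTcard.le
    have := card_le_of_linearIndepOn_of_isDiag hP T (LinearIndepOn.mono hli hTb') hd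
    omega
  obtain ⟨P, hP, hd⟩ := hsmall b hbS (by omega)
  refine ⟨P, hP, fun s hs => (mem_range_conjDiagonal hP s).1 ?_⟩
  have hle : Submodule.span ℂ (b : Set (Matrix (Fin n) (Fin n) ℂ)) ≤
      LinearMap.range (conjDiagonal P) :=
    Submodule.span_le.2 fun t ht => (mem_range_conjDiagonal hP t).2 (hd t ht)
  exact hle (hspan ▸ Submodule.subset_span hs)
end
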